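/- arXiv:2503.16017 — 3 statements merged into one kernel-verified Lean document; each statement's English description precedes it below -/
import Mathlib

section
/- (Fell absorption for discrete groupoids.) Let G be a groupoid and π a *-representation of G on a complex Hilbert space H, and let W_π be the partial isometry on ℓ²(Mor G, H) defined by (W_π f)(β) = π(β)(f β). For each morphism γ of G, let L_γ be the bounded operator on ℓ²(Mor G, H) given by (L_γ f)(α) = f(γ⁻¹α) if r(α) = r(γ) and 0 otherwise (this realizes 1 ⊗ λ_γ), and let M_γ be the bounded operator given by (M_γ f)(α) = π(γ)(f(γ⁻¹α)) if r(α) = r(γ) and 0 otherwise (this realizes π(γ) ⊗ λ_γ). Then W_π ∘ L_γ ∘ W_π* = M_γ for every morphism γ. -/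
open CategoryTheory ContinuousLinearMap

/-- The type of all morphisms of a groupoid. -/
abbrev Mor (G : Type*) [Groupoid G] := Σ X Y : G, X ⟶ Y

/-- A *-representation of a groupoid `G` on a complex Hilbert space `H`. -/
structure GroupoidStarRep (G : Type*) [Groupoid G] (H : Type*) [NormedAddCommGroup H]
    [InnerProductSpace ℂ H] [CompleteSpace H] where
  π : Mor G → H →L[ℂ] H
  map_comp : ∀ (X Y Z : G) (g : X ⟶ Y) (h : Y ⟶ Z),
    π ⟨X, Z, g ≫ h⟩ = (π ⟨Y, Z, h⟩).comp (π ⟨X, Y, g⟩)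
  map_inv : ∀ (X Y : G) (g : X ⟶ Y),
    π ⟨Y, X, Groupoid.inv g⟩ = adjoint (π ⟨X, Y, g⟩)

/-!
`W_π` is diagonal, with entry `π(β)` at `β`, hence so is `W_π*`, with entry `π(β)*` at `β`. The only
possibly nonzero entry of `1 ⊗ λ_γ` in row `α` is at `γ⁻¹α`, so the corresponding entry of
`W_π (1 ⊗ λ_γ) W_π*` is `π(α) π(γ⁻¹α)* = π(α α⁻¹ γ) = π(γ)`.
-/

theorem diagonal_apply_single {ι : Type*} [DecidableEq ι] {E F : ι → Type*}
    [∀ i, NormedAddCommGroup (E i)] [∀ i, NormedAddCommGroup (F i)] {p : ENNReal}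
    {T : lp E p → lp F p} {t : ∀ i, E i → F i} (hT : ∀ f i, T f i = t i (f i))
    (ht : ∀ i, t i 0 = 0) (i : ι) (v : E i) :
    T (lp.single p i v) = lp.single p i (t i v) := by
  ext j
  rw [hT]
  obtain rfl | hj := eq_or_ne j i
  · simp only [lp.single_apply_self]
  · simp only [lp.single_apply_ne _ _ _ hj, ht]

theorem adjoint_diagonal_apply {ι 𝕜 : Type*} [RCLike 𝕜] {E F : ι → Type*}
    [∀ i, NormedAddCommGroup (E i)] [∀ i, InnerProductSpace 𝕜 (E i)] [∀ i, CompleteSpace (E i)]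
    [∀ i, NormedAddCommGroup (F i)] [∀ i, InnerProductSpace 𝕜 (F i)] [∀ i, CompleteSpace (F i)]
    {T : lp E 2 →L[𝕜] lp F 2} {t : ∀ i, E i →L[𝕜] F i} (hT : ∀ f i, T f i = t i (f i))
    (f : lp F 2) (i : ι) : adjoint T f i = adjoint (t i) (f i) := by
  classical
  refine ext_inner_left 𝕜 fun v ↦ ?_
  calc
    inner 𝕜 v (adjoint T f i) = inner 𝕜 (lp.single 2 i v) (adjoint T f) :=
      (lp.inner_single_left i v _).symm
    _ = inner 𝕜 (T (lp.single 2 i v)) f := adjoint_inner_right T _ f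
    _ = inner 𝕜 (lp.single 2 i (t i v)) f := by rw [diagonal_apply_single hT fun j ↦ map_zero (t j)]
    _ = inner 𝕜 (t i v) (f i) := lp.inner_single_left i _ f
    _ = inner 𝕜 v (adjoint (t i) (f i)) := (adjoint_inner_right (t i) v _).symm

namespace GroupoidStarRep

variable {G : Type*} [Groupoid G] {H : Type*} [NormedAddCommGroup H] [InnerProductSpace ℂ H]
  [CompleteSpace H]

theorem comp_adjoint (ρ : GroupoidStarRep G H) {X Y Z : G} (a : Z ⟶ Y) (b : Z ⟶ X) :
    (ρ.π ⟨Z, Y, a⟩).comp (adjoint (ρ.π ⟨Z, X, b⟩)) = ρ.π ⟨X, Y, Groupoid.inv b ≫ a⟩ := by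
  rw [ρ.map_comp, ρ.map_inv]

theorem comp_adjoint_comp_inv (ρ : GroupoidStarRep G H) {X Y Z : G} (a : Z ⟶ Y) (g : X ⟶ Y) :
    (ρ.π ⟨Z, Y, a⟩).comp (adjoint (ρ.π ⟨Z, X, a ≫ Groupoid.inv g⟩)) = ρ.π ⟨X, Y, g⟩ := by
  have inv_comp_cancel : Groupoid.inv (a ≫ Groupoid.inv g) ≫ a = g := by
    simp [Groupoid.inv_eq_inv]
  rw [ρ.comp_adjoint, inv_comp_cancel]

end GroupoidStarRep

/-- Fell absorption for discrete groupoids: `W_π (1 ⊗ λ_γ) W_π* = π(γ) ⊗ λ_γ`.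
Here `γ` is a morphism `g : X ⟶ Y` (so `d γ = X`, `r γ = Y`), `L` realizes `1 ⊗ λ_γ`,
acting by `(L f) α = f (γ⁻¹ α)` when `r α = r γ` and `0` otherwise, and `M` realizes
`π(γ) ⊗ λ_γ`, acting by `(M f) α = π γ (f (γ⁻¹ α))` when `r α = r γ` and `0` otherwise. -/
theorem stmt2 {G : Type*} [Groupoid G] {H : Type*} [NormedAddCommGroup H]
    [InnerProductSpace ℂ H] [CompleteSpace H] (ρ : GroupoidStarRep G H)
    (W : lp (fun _ : Mor G => H) 2 →L[ℂ] lp (fun _ : Mor G => H) 2)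
    (hW : ∀ (f : lp (fun _ : Mor G => H) 2) (β : Mor G), W f β = ρ.π β (f β))
    (X Y : G) (g : X ⟶ Y)
    (L M : lp (fun _ : Mor G => H) 2 →L[ℂ] lp (fun _ : Mor G => H) 2)
    (hL : ∀ (f : lp (fun _ : Mor G => H) 2) (Z : G) (a : Z ⟶ Y),
      L f ⟨Z, Y, a⟩ = f ⟨Z, X, a ≫ Groupoid.inv g⟩)
    (hL' : ∀ (f : lp (fun _ : Mor G => H) 2) (Z Q : G) (a : Z ⟶ Q), Q ≠ Y →
      L f ⟨Z, Q, a⟩ = 0)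
    (hM : ∀ (f : lp (fun _ : Mor G => H) 2) (Z : G) (a : Z ⟶ Y),
      M f ⟨Z, Y, a⟩ = ρ.π ⟨X, Y, g⟩ (f ⟨Z, X, a ≫ Groupoid.inv g⟩))
    (hM' : ∀ (f : lp (fun _ : Mor G => H) 2) (Z Q : G) (a : Z ⟶ Q), Q ≠ Y →
      M f ⟨Z, Q, a⟩ = 0) :
    W.comp (L.comp (adjoint W)) = M := by
  ext f ⟨Z, Q, a⟩
  change W (L (adjoint W f)) ⟨Z, Q, a⟩ = M f ⟨Z, Q, a⟩
  rw [hW]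
  obtain rfl | hQ := eq_or_ne Q Y
  · calc
      ρ.π ⟨Z, Q, a⟩ (L (adjoint W f) ⟨Z, Q, a⟩)
          = ρ.π ⟨Z, Q, a⟩
              (adjoint (ρ.π ⟨Z, X, a ≫ Groupoid.inv g⟩) (f ⟨Z, X, a ≫ Groupoid.inv g⟩)) := by
        rw [hL, adjoint_diagonal_apply hW]
      _ = ρ.π ⟨X, Q, g⟩ (f ⟨Z, X, a ≫ Groupoid.inv g⟩) :=
        DFunLike.congr_fun (ρ.comp_adjoint_comp_inv a g) _
      _ = M f ⟨Z, Q, a⟩ := (hM f Z a).symm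
  · rw [hL' _ _ _ _ hQ, hM' _ _ _ _ hQ, map_zero]
end

section
/- Let K be a complex Hilbert space with a Hilbert basis (e_i)_{i ∈ ι}, let J be a type, and let E := ℓ²(J, K) (this realizes the Hilbert-space tensor product H ⊗ K for H = ℓ²(J)). For a bounded operator T on K let T̂ denote the bounded operator on E of pointwise application, (T̂ f)(j) = T(f j) (realizing 1 ⊗ T). Let W be a bounded operator on E which is a partial isometry (W ∘ W* ∘ W = W), with initial subspace M := (ker W)^⊥. Assume: (i) for every i ∈ ι there exists a nonzero c ∈ ℓ²(J, ℂ) such that the element (j ↦ c_j • e_i) of E lies in M (realizing v ⊗ e_i ∈ M with v ≠ 0); (ii) A is a star-subalgebra of the bounded operators on K such that T̂(M) ⊆ M for every T ∈ A. Then the map A ∋ T ↦ W ∘ T̂ ∘ W* is injective; that is, if T ∈ A satisfies W ∘ T̂ ∘ W* = 0 then T = 0. -/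
open ContinuousLinearMap

/-! The equation `W S W* = 0` says that `W S` vanishes on the range of `W*`, hence by continuity on
its closure `(ker W)ᗮ`. If `S` preserves `(ker W)ᗮ`, then `S` sends this subspace into
`ker W ∩ (ker W)ᗮ = 0`. When `S` is the pointwise application of `T`, this means that `T` kills
every coordinate of every vector of `(ker W)ᗮ`. Every `e i` is a scalar multiple of such a
coordinate, so `T` vanishes on a total family. -/

open Submodule

section InnerProductSpace

variable {𝕜 E F : Type*} [RCLike 𝕜]
  [NormedAddCommGroup E] [InnerProductSpace 𝕜 E] [CompleteSpace E]
  [NormedAddCommGroup F] [InnerProductSpace 𝕜 F] [CompleteSpace F]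

theorem orthogonal_ker_le_ker_of_comp_adjoint_eq_zero {G : Type*} [AddCommGroup G] [Module 𝕜 G]
    [TopologicalSpace G] [T1Space G] {W : E →L[𝕜] F} {X : E →L[𝕜] G}
    (h : X.comp (adjoint W) = 0) : W.kerᗮ ≤ X.ker := by
  rw [orthogonal_ker]
  refine topologicalClosure_minimal _ ?_ X.isClosed_ker
  rintro _ ⟨y, rfl⟩
  exact DFunLike.congr_fun h y

theorem orthogonal_ker_le_ker_of_comp_comp_adjoint_eq_zero {W : E →L[𝕜] F} {S : E →L[𝕜] E}
    (hS : ∀ m ∈ W.kerᗮ, S m ∈ W.kerᗮ) (h : W.comp (S.comp (adjoint W)) = 0) :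
    W.kerᗮ ≤ S.ker := by
  intro m hm
  have hWS : W.kerᗮ ≤ (W.comp S).ker := orthogonal_ker_le_ker_of_comp_adjoint_eq_zero h
  exact disjoint_def.mp W.ker.orthogonal_disjoint (S m) (hWS hm) (hS m hm)

end InnerProductSpace

section CoordSpan

variable {J K : Type*} {p : ENNReal} [NormedAddCommGroup K]
  {R : Type*} [NormedRing R] [Module R K] [IsBoundedSMul R K]
  {𝕜 : Type*} [NormedDivisionRing 𝕜] [Module 𝕜 K] [IsBoundedSMul 𝕜 K]

/-- The linear span in `K` of all coordinates `f j` of the elements `f` of a subspace `M` of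
`ℓᵖ(J, K)`. Its closure is the smallest closed subspace `L` of `K` with `M ⊆ ℓᵖ(J, L)`; the
operators on `K` whose pointwise application annihilates `M` are those that vanish on it. -/
def coordSpan (M : Submodule R (lp (fun _ : J => K) p)) : Submodule R K :=
  span R {x | ∃ f ∈ M, ∃ j, f j = x}

theorem apply_mem_coordSpan {M : Submodule R (lp (fun _ : J => K) p)}
    {f : lp (fun _ : J => K) p} (hf : f ∈ M) (j : J) : f j ∈ coordSpan M :=
  subset_span ⟨f, hf, j, rfl⟩

theorem coordSpan_le_iff {M : Submodule R (lp (fun _ : J => K) p)} {N : Submodule R K} :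
    coordSpan M ≤ N ↔ ∀ f ∈ M, ∀ j, f j ∈ N := by
  refine ⟨fun h f hf j => h (apply_mem_coordSpan hf j), fun h => span_le.mpr ?_⟩
  rintro _ ⟨f, hf, j, rfl⟩
  exact h f hf j

theorem mem_coordSpan_of_apply_eq_smul {M : Submodule 𝕜 (lp (fun _ : J => K) p)} {x : K}
    {c : J → 𝕜} (hc : c ≠ 0) {v : lp (fun _ : J => K) p} (hv : ∀ j, v j = c j • x)
    (hvM : v ∈ M) : x ∈ coordSpan M := by
  obtain ⟨j, hj⟩ := Function.ne_iff.mp hc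
  have hmem : c j • x ∈ coordSpan M := hv j ▸ apply_mem_coordSpan hvM j
  exact (smul_mem_iff _ hj).mp hmem

theorem dense_coordSpan {M : Submodule 𝕜 (lp (fun _ : J => K) p)} {ι : Type*} {e : ι → K}
    (he : Dense (span 𝕜 (Set.range e) : Set K))
    (hM : ∀ i, ∃ c : J → 𝕜, c ≠ 0 ∧
      ∃ v : lp (fun _ : J => K) p, (∀ j, v j = c j • e i) ∧ v ∈ M) :
    Dense (coordSpan M : Set K) := by
  refine he.mono (span_le.mpr (Set.range_subset_iff.mpr fun i => ?_))
  obtain ⟨c, hc, v, hv, hvM⟩ := hM i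
  exact mem_coordSpan_of_apply_eq_smul hc hv hvM

end CoordSpan

theorem stmt4_general {𝕜 J K F : Type*} [RCLike 𝕜]
    [NormedAddCommGroup K] [InnerProductSpace 𝕜 K] [CompleteSpace K]
    [NormedAddCommGroup F] [InnerProductSpace 𝕜 F] [CompleteSpace F]
    {T : K →L[𝕜] K} {S : lp (fun _ : J => K) 2 →L[𝕜] lp (fun _ : J => K) 2}
    (hST : ∀ (f : lp (fun _ : J => K) 2) (j : J), S f j = T (f j))
    {W : lp (fun _ : J => K) 2 →L[𝕜] F}
    (hdense : Dense (coordSpan W.kerᗮ : Set K))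
    (hS : ∀ m ∈ W.kerᗮ, S m ∈ W.kerᗮ) (h : W.comp (S.comp (adjoint W)) = 0) : T = 0 := by
  have hSM : W.kerᗮ ≤ S.ker := orthogonal_ker_le_ker_of_comp_comp_adjoint_eq_zero hS h
  have hTM : coordSpan W.kerᗮ ≤ T.ker := coordSpan_le_iff.mpr fun m hm j => by
    have hSm : S m = 0 := hSM hm
    calc T (m j) = S m j := (hST m j).symm
      _ = 0 := by rw [hSm, lp.coeFn_zero, Pi.zero_apply]
  exact ext_on (hdense.mono subset_span) fun x hx => hTM hx

/-- Let `K` be a complex Hilbert space with Hilbert basis `(e i)`, `E = ℓ²(J, K)`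
(realizing `ℓ²(J) ⊗ K`), `hat` the "pointwise application" lift `T ↦ 1 ⊗ T`,
`W` a partial isometry on `E` with initial subspace `M = (ker W)ᗮ` such that for each `i`
some nonzero simple tensor `v ⊗ e i` lies in `M`, and `A` a star-subalgebra of `B(K)`
with `(1 ⊗ T)(M) ⊆ M` for all `T ∈ A`. Then `T ↦ W (1 ⊗ T) W*` is injective on `A`. -/
theorem stmt4 {K : Type*} [NormedAddCommGroup K] [InnerProductSpace ℂ K] [CompleteSpace K]
    {ι : Type*} (e : HilbertBasis ι ℂ K) (J : Type*)
    (hat : (K →L[ℂ] K) → (lp (fun _ : J => K) 2 →L[ℂ] lp (fun _ : J => K) 2))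
    (hhat : ∀ (T : K →L[ℂ] K) (f : lp (fun _ : J => K) 2) (j : J), hat T f j = T (f j))
    (W : lp (fun _ : J => K) 2 →L[ℂ] lp (fun _ : J => K) 2)
    (hWpi : W.comp ((adjoint W).comp W) = W)
    (hbasis : ∀ i : ι, ∃ c : lp (fun _ : J => ℂ) 2, c ≠ 0 ∧
      ∃ v : lp (fun _ : J => K) 2, (∀ j : J, v j = c j • e i) ∧ v ∈ (LinearMap.ker W.toLinearMap)ᗮ)
    (A : StarSubalgebra ℂ (K →L[ℂ] K))
    (hinv : ∀ T ∈ A, ∀ m ∈ (LinearMap.ker W.toLinearMap)ᗮ, hat T m ∈ (LinearMap.ker W.toLinearMap)ᗮ) :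
    ∀ T ∈ A, W.comp ((hat T).comp (adjoint W)) = 0 → T = 0 := by
  have hdense := dense_coordSpan (dense_iff_topologicalClosure_eq_top.mpr e.dense_span)
    fun i => (hbasis i).imp' _ fun _ => And.imp_left (mt (lp.ext ·))
  exact fun T hT => stmt4_general (hhat T) hdense (hinv T hT)
end

section
/- Let G be a groupoid. For a finitely supported function f : Mor G → ℂ define Λ(f) := Σ_γ f(γ) λ_γ, a bounded operator on ℓ²(Mor G), and Λ₂(f) := Σ_γ f(γ) (λ_γ ⊗ λ_γ), a bounded operator on ℓ²(Mor G × Mor G), where (λ_γ ⊗ λ_γ) e_{(α,β)} = e_{(γα, γβ)} if d(γ) = r(α) and d(γ) = r(β), and 0 otherwise. Let W_λ be the bounded operator on ℓ²(Mor G × Mor G) with W_λ e_{(α,β)} = e_{(βα, β)} if r(α) = d(β) and 0 otherwise, and let 1 ⊗ Λ(f) := Σ_γ f(γ)(1 ⊗ λ_γ), where (1 ⊗ λ_γ) e_{(α,β)} = e_{(α, γβ)} if d(γ) = r(β) and 0 otherwise. Then: (a) W_λ ∘ (1 ⊗ Λ(f)) ∘ W_λ* = Λ₂(f) for every finitely supported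 f; and (b) Λ₂(f) = 0 if and only if Λ(f) = 0. (Hence λ_γ ↦ λ_γ ⊗ λ_γ extends to a well-defined injective *-homomorphism on the image of Λ.) -/
open CategoryTheory ContinuousLinearMap

/-!
All operators involved send each basis vector to a basis vector or to `0`, so each of them is given
by a relation between index sets; composition of operators is composition of relations, and the
adjoint belongs to the converse relation. Part (a) thus becomes an identity between relations on
pairs of morphisms: on a pair `(α, β)`, the operator `W_λ*` divides, `α = βξ`, the operator
`1 ⊗ λ_γ` replaces `β` by `γβ`, and `W_λ` multiplies back, `(γβ)ξ = γα`. For (b), both families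
`λ_γ` and `λ_γ ⊗ λ_γ` are linearly independent, because `γ` is recovered from the product of `γ`
with the identity at its source; hence both sides of the equivalence say that `f = 0`.
-/

section BasisGraph

variable {𝕜 ι κ μ τ : Type*} [DecidableEq ι] [DecidableEq κ] [DecidableEq μ] {p : ENNReal}
  [Fact (1 ≤ p)]

/-- The operator `T` is given on standard basis vectors by the relation `R`, which is viewed as the
graph of a partial function: `T e_i = e_j` if `R i j`, and `T e_i = 0` if `i` is related to nothing.
Single-valuedness of `R` is not part of the definition, but follows from the first condition. -/
structure HasBasisGraph [NormedField 𝕜]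
    (T : lp (fun _ : ι ↦ 𝕜) p →L[𝕜] lp (fun _ : κ ↦ 𝕜) p) (R : ι → κ → Prop) : Prop where
  map_single : ∀ ⦃i j⦄, R i j → T (lp.single p i 1) = lp.single p j 1
  map_single_eq_zero : ∀ ⦃i⦄, (∀ j, ¬ R i j) → T (lp.single p i 1) = 0

namespace HasBasisGraph

section NormedField

variable [NormedField 𝕜] {R : ι → κ → Prop} {S T : lp (fun _ : ι ↦ 𝕜) p →L[𝕜] lp (fun _ : κ ↦ 𝕜) p}

open scoped Classical in
theorem apply_single_apply (hT : HasBasisGraph T R) (i : ι) (j : κ) :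
    T (lp.single p i 1) j = if R i j then 1 else 0 := by
  by_cases hi : ∃ k, R i k
  · obtain ⟨k, hk⟩ := hi
    rw [hT.map_single hk]
    split_ifs with hj
    · rw [← hT.map_single hk, hT.map_single hj, lp.single_apply_self]
    · exact lp.single_apply_ne _ _ _ fun hjk ↦ hj (hjk ▸ hk)
  · rw [not_exists] at hi
    rw [hT.map_single_eq_zero hi, if_neg (hi j), lp.coeFn_zero, Pi.zero_apply]

theorem unique (hp : p ≠ ⊤) (hS : HasBasisGraph S R) (hT : HasBasisGraph T R) : S = T := by
  refine lp.ext_continuousLinearMap hp fun i ↦ ContinuousLinearMap.ext_ring ?_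
  change S (lp.single p i 1) = T (lp.single p i 1)
  classical
  ext j
  rw [hS.apply_single_apply, hT.apply_single_apply]

theorem comp {Q : κ → μ → Prop} {S : lp (fun _ : κ ↦ 𝕜) p →L[𝕜] lp (fun _ : μ ↦ 𝕜) p}
    (hS : HasBasisGraph S Q) (hT : HasBasisGraph T R) :
    HasBasisGraph (S.comp T) (Relation.Comp R Q) where
  map_single := by
    rintro i k ⟨j, hij, hjk⟩
    rw [ContinuousLinearMap.comp_apply, hT.map_single hij, hS.map_single hjk]
  map_single_eq_zero i hi := by
    rw [ContinuousLinearMap.comp_apply]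
    by_cases h : ∃ j, R i j
    · obtain ⟨j, hij⟩ := h
      rw [hT.map_single hij, hS.map_single_eq_zero fun k hjk ↦ hi k ⟨j, hij, hjk⟩]
    · rw [hT.map_single_eq_zero (not_exists.1 h), map_zero]

theorem linearIndependent {T : τ → lp (fun _ : ι ↦ 𝕜) p →L[𝕜] lp (fun _ : κ ↦ 𝕜) p}
    {R : τ → ι → κ → Prop} (hT : ∀ t, HasBasisGraph (T t) (R t)) (a : τ → ι) (b : τ → κ)
    (hab : ∀ s t, R s (a t) (b t) ↔ s = t) : LinearIndependent 𝕜 T := by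
  classical
  let coeff (t : τ) : Module.Dual 𝕜 (lp (fun _ : ι ↦ 𝕜) p →L[𝕜] lp (fun _ : κ ↦ 𝕜) p) :=
    lp.evalₗ (𝕜 := 𝕜) (fun _ : κ ↦ 𝕜) p (b t) ∘ₗ LinearMap.applyₗ (lp.single p (a t) 1) ∘ₗ coeLM 𝕜
  have coeff_apply (s t : τ) : coeff t (T s) = if s = t then 1 else 0 :=
    ((hT s).apply_single_apply (a t) (b t)).trans (if_congr (hab s t) rfl rfl)
  exact .of_pairwise_dual_eq_zero_one T coeff
    (fun t s hts ↦ (coeff_apply s t).trans (if_neg hts.symm))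
    fun t ↦ (coeff_apply t t).trans (if_pos rfl)

end NormedField

protected theorem adjoint [RCLike 𝕜] {R : ι → κ → Prop}
    {T : lp (fun _ : ι ↦ 𝕜) 2 →L[𝕜] lp (fun _ : κ ↦ 𝕜) 2}
    (hT : HasBasisGraph T R) (hR : Relator.LeftUnique R) :
    HasBasisGraph (adjoint T) (flip R) := by
  classical
  have adjoint_coeff (i : ι) (j : κ) :
      adjoint T (lp.single 2 j 1) i = if R i j then 1 else 0 := by
    calc adjoint T (lp.single 2 j 1) i
        = inner 𝕜 (lp.single 2 i (1 : 𝕜)) (adjoint T (lp.single 2 j 1)) := by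
          rw [lp.inner_single_left, RCLike.inner_apply, map_one, mul_one]
      _ = inner 𝕜 (T (lp.single 2 i 1)) (lp.single 2 j (1 : 𝕜)) := adjoint_inner_right _ _ _
      _ = star (T (lp.single 2 i 1) j) := by
          rw [lp.inner_single_right, RCLike.inner_apply, one_mul, RCLike.star_def]
      _ = if R i j then 1 else 0 := by
          rw [hT.apply_single_apply, apply_ite star, star_one, star_zero]
  refine ⟨fun j i hij ↦ ?_, fun j hj ↦ ?_⟩
  · ext k
    rw [adjoint_coeff, lp.single_apply, Pi.single_apply]
    exact if_congr ⟨fun hkj ↦ hR hkj hij, fun hki ↦ hki ▸ hij⟩ rfl rfl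
  · ext k
    exact (adjoint_coeff k j).trans (if_neg (hj k))

end HasBasisGraph

end BasisGraph

section Groupoid

variable {G : Type*} [Groupoid G] {γ α α' β β' ξ δ : Mor G}

/-- `IsComp γ β δ` says that the product `γβ` is defined and equal to `δ`. The factors are listed in
the multiplicative order, so the morphism applied first is `β`. -/
inductive IsComp : Mor G → Mor G → Mor G → Prop
  | mk {X Y Z : G} (b : X ⟶ Y) (g : Y ⟶ Z) : IsComp ⟨Y, Z, g⟩ ⟨X, Y, b⟩ ⟨X, Z, b ≫ g⟩

namespace IsComp

theorem source_eq (h : IsComp γ β δ) : β.2.1 = γ.1 := by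
  cases h; rfl

theorem exists_of_source_eq (h : β.2.1 = γ.1) : ∃ δ, IsComp γ β δ := by
  obtain ⟨X, Y, b⟩ := β
  obtain ⟨_, Z, g⟩ := γ
  obtain rfl : Y = _ := h
  exact ⟨_, mk b g⟩

theorem right_id_iff {X Z : G} {d : X ⟶ Z} :
    IsComp γ ⟨X, X, 𝟙 X⟩ ⟨X, Z, d⟩ ↔ γ = ⟨X, Z, d⟩ := by
  constructor
  · generalize he : 𝟙 X = e
    rintro ⟨⟩
    rw [← he, Category.id_comp]
  · rintro rfl
    simpa only [Category.id_comp] using mk (𝟙 X) d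

theorem assoc_iff (hα : IsComp β ξ α) (hβ : IsComp γ β β') :
    IsComp β' ξ α' ↔ IsComp γ α α' := by
  obtain ⟨x, b⟩ := hα
  generalize hd : x ≫ b = d
  obtain ⟨_, g⟩ := hβ
  generalize hc : b ≫ g = c
  constructor
  · rintro ⟨⟩
    simpa only [← hc, ← hd, Category.assoc] using mk (x ≫ b) g
  · rintro ⟨⟩
    simpa only [← hc, ← hd, Category.assoc] using mk x (b ≫ g)

theorem left_cancel (hα : IsComp β α δ) (hξ : IsComp β ξ δ) : α = ξ := by
  obtain ⟨a, b⟩ := hα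
  generalize hd : a ≫ b = d at hξ
  obtain ⟨x, _⟩ := hξ
  rw [(cancel_mono b).1 hd]

theorem exists_of_target_eq (h : α.2.1 = β.2.1) : ∃ ξ, IsComp β ξ α := by
  obtain ⟨X, Z, a⟩ := α
  obtain ⟨Y, _, b⟩ := β
  obtain rfl : Z = _ := h
  exact ⟨⟨X, Y, a ≫ Groupoid.inv b⟩, by simpa using mk (a ≫ Groupoid.inv b) b⟩

end IsComp

/-- The graph of `λ_γ ⊗ λ_γ`, namely `(α, β) ↦ (γα, γβ)`. -/
def DiagonalMul (γ : Mor G) (x y : Mor G × Mor G) : Prop :=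
  IsComp γ x.1 y.1 ∧ IsComp γ x.2 y.2

/-- The graph of `1 ⊗ λ_γ`, namely `(α, β) ↦ (α, γβ)`. -/
def SecondMul (γ : Mor G) (x y : Mor G × Mor G) : Prop :=
  x.1 = y.1 ∧ IsComp γ x.2 y.2

/-- The graph of `W_λ`, namely `(α, β) ↦ (βα, β)`. -/
def FirstMulBySecond (x y : Mor G × Mor G) : Prop :=
  IsComp x.2 x.1 y.1 ∧ x.2 = y.2

theorem leftUnique_firstMulBySecond : Relator.LeftUnique (FirstMulBySecond (G := G)) := by
  rintro ⟨α, _⟩ ⟨ξ, _⟩ ⟨δ, β⟩ ⟨hα, rfl⟩ ⟨hξ, rfl⟩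
  exact congrArg (·, _) (hα.left_cancel hξ)

theorem comp_flip_firstMulBySecond_secondMul (γ : Mor G) :
    Relation.Comp (Relation.Comp (flip FirstMulBySecond) (SecondMul γ)) FirstMulBySecond =
      DiagonalMul γ := by
  ext ⟨α, β⟩ ⟨α', β'⟩
  constructor
  · rintro ⟨⟨_, _⟩, ⟨⟨ξ, _⟩, ⟨hα, rfl⟩, rfl, hβ⟩, hα', rfl⟩
    exact ⟨(hα.assoc_iff hβ).1 hα', hβ⟩
  · rintro ⟨hα', hβ⟩
    obtain ⟨ξ, hα⟩ := IsComp.exists_of_target_eq (hα'.source_eq.trans hβ.source_eq.symm)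
    exact ⟨(ξ, β'), ⟨(ξ, β), ⟨hα, rfl⟩, rfl, hβ⟩, (hα.assoc_iff hβ).2 hα', rfl⟩

section NormedField

variable {𝕜 : Type*} [NormedField 𝕜] {p : ENNReal} [Fact (1 ≤ p)]

theorem hasBasisGraph_isComp [DecidableEq (Mor G)]
    {T : lp (fun _ : Mor G ↦ 𝕜) p →L[𝕜] lp (fun _ : Mor G ↦ 𝕜) p} {X Y : G} {g : X ⟶ Y}
    (hT : ∀ (P : G) (b : P ⟶ X), T (lp.single p ⟨P, X, b⟩ 1) = lp.single p ⟨P, Y, b ≫ g⟩ 1)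
    (hT' : ∀ (P Q : G) (b : P ⟶ Q), Q ≠ X → T (lp.single p ⟨P, Q, b⟩ 1) = 0) :
    HasBasisGraph T (IsComp ⟨X, Y, g⟩) where
  map_single := by
    rintro _ _ ⟨b, _⟩
    exact hT _ b
  map_single_eq_zero _ hβ := hT' _ _ _ fun h ↦ (IsComp.exists_of_source_eq h).elim hβ

theorem linearIndependent_of_hasBasisGraph_isComp [DecidableEq (Mor G)]
    {T : Mor G → lp (fun _ : Mor G ↦ 𝕜) p →L[𝕜] lp (fun _ : Mor G ↦ 𝕜) p}
    (hT : ∀ γ, HasBasisGraph (T γ) (IsComp γ)) : LinearIndependent 𝕜 T :=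
  HasBasisGraph.linearIndependent hT (fun γ ↦ ⟨γ.1, γ.1, 𝟙 γ.1⟩) id
    fun _ _ ↦ IsComp.right_id_iff

variable [DecidableEq (Mor G × Mor G)]
  {T : lp (fun _ : Mor G × Mor G ↦ 𝕜) p →L[𝕜] lp (fun _ : Mor G × Mor G ↦ 𝕜) p}

theorem hasBasisGraph_diagonalMul {X Y : G} {g : X ⟶ Y}
    (hT : ∀ (P Q : G) (a : P ⟶ X) (b : Q ⟶ X),
      T (lp.single p (⟨P, X, a⟩, ⟨Q, X, b⟩) 1) =
        lp.single p (⟨P, Y, a ≫ g⟩, ⟨Q, Y, b ≫ g⟩) 1)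
    (hT' : ∀ α β : Mor G, α.2.1 ≠ X ∨ β.2.1 ≠ X → T (lp.single p (α, β) 1) = 0) :
    HasBasisGraph T (DiagonalMul ⟨X, Y, g⟩) where
  map_single := by
    rintro ⟨_, _⟩ ⟨_, _⟩ ⟨⟨a, _⟩, ⟨b, _⟩⟩
    exact hT _ _ a b
  map_single_eq_zero := by
    rintro ⟨α, β⟩ hαβ
    refine hT' _ _ (not_and_or.1 fun ⟨hα, hβ⟩ ↦ ?_)
    obtain ⟨α', hα'⟩ := IsComp.exists_of_source_eq (γ := ⟨X, Y, g⟩) hα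
    obtain ⟨β', hβ'⟩ := IsComp.exists_of_source_eq (γ := ⟨X, Y, g⟩) hβ
    exact hαβ (α', β') ⟨hα', hβ'⟩

theorem hasBasisGraph_secondMul {X Y : G} {g : X ⟶ Y}
    (hT : ∀ (α : Mor G) (P : G) (b : P ⟶ X),
      T (lp.single p (α, ⟨P, X, b⟩) 1) = lp.single p (α, ⟨P, Y, b ≫ g⟩) 1)
    (hT' : ∀ (α : Mor G) (P Q : G) (b : P ⟶ Q), Q ≠ X →
      T (lp.single p (α, ⟨P, Q, b⟩) 1) = 0) :
    HasBasisGraph T (SecondMul ⟨X, Y, g⟩) where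
  map_single := by
    rintro ⟨α, _⟩ ⟨_, _⟩ ⟨rfl, ⟨b, _⟩⟩
    exact hT α _ b
  map_single_eq_zero := by
    rintro ⟨α, β⟩ hαβ
    refine hT' _ _ _ _ fun h ↦ ?_
    obtain ⟨β', hβ'⟩ := IsComp.exists_of_source_eq (γ := ⟨X, Y, g⟩) h
    exact hαβ (α, β') ⟨rfl, hβ'⟩

theorem hasBasisGraph_firstMulBySecond
    (hT : ∀ (X Y Z : G) (a : X ⟶ Y) (b : Y ⟶ Z),
      T (lp.single p (⟨X, Y, a⟩, ⟨Y, Z, b⟩) 1) = lp.single p (⟨X, Z, a ≫ b⟩, ⟨Y, Z, b⟩) 1)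
    (hT' : ∀ (X Y P Q : G) (a : X ⟶ Y) (b : P ⟶ Q), Y ≠ P →
      T (lp.single p (⟨X, Y, a⟩, ⟨P, Q, b⟩) 1) = 0) :
    HasBasisGraph T FirstMulBySecond where
  map_single := by
    rintro ⟨_, _⟩ ⟨_, _⟩ ⟨⟨a, b⟩, rfl⟩
    exact hT _ _ _ a b
  map_single_eq_zero := by
    rintro ⟨α, β⟩ hαβ
    refine hT' _ _ _ _ _ _ fun h ↦ ?_
    obtain ⟨δ, hδ⟩ := IsComp.exists_of_source_eq h
    exact hαβ (δ, β) ⟨hδ, rfl⟩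

theorem linearIndependent_of_hasBasisGraph_diagonalMul
    {T : Mor G → lp (fun _ : Mor G × Mor G ↦ 𝕜) p →L[𝕜] lp (fun _ : Mor G × Mor G ↦ 𝕜) p}
    (hT : ∀ γ, HasBasisGraph (T γ) (DiagonalMul γ)) : LinearIndependent 𝕜 T :=
  HasBasisGraph.linearIndependent hT
    (fun γ ↦ (⟨γ.1, γ.1, 𝟙 γ.1⟩, ⟨γ.1, γ.1, 𝟙 γ.1⟩)) (fun γ ↦ (γ, γ))
    fun _ _ ↦ and_self_iff.trans IsComp.right_id_iff

end NormedField

section RCLike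

variable {𝕜 : Type*} [RCLike 𝕜] [DecidableEq (Mor G × Mor G)]

theorem comp_secondMul_comp_adjoint_eq {γ : Mor G}
    {D S W : lp (fun _ : Mor G × Mor G ↦ 𝕜) 2 →L[𝕜] lp (fun _ : Mor G × Mor G ↦ 𝕜) 2}
    (hD : HasBasisGraph D (DiagonalMul γ)) (hS : HasBasisGraph S (SecondMul γ))
    (hW : HasBasisGraph W FirstMulBySecond) : W.comp (S.comp (adjoint W)) = D := by
  have hWSW := hW.comp (hS.comp (hW.adjoint leftUnique_firstMulBySecond))
  rw [comp_flip_firstMulBySecond_secondMul] at hWSW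
  exact hWSW.unique ENNReal.ofNat_ne_top hD

theorem stmt7_general [DecidableEq (Mor G)]
    {lam : Mor G → lp (fun _ : Mor G ↦ 𝕜) 2 →L[𝕜] lp (fun _ : Mor G ↦ 𝕜) 2}
    {lam2 L : Mor G → lp (fun _ : Mor G × Mor G ↦ 𝕜) 2 →L[𝕜] lp (fun _ : Mor G × Mor G ↦ 𝕜) 2}
    {W : lp (fun _ : Mor G × Mor G ↦ 𝕜) 2 →L[𝕜] lp (fun _ : Mor G × Mor G ↦ 𝕜) 2}
    (hlam : ∀ γ, HasBasisGraph (lam γ) (IsComp γ))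
    (hlam2 : ∀ γ, HasBasisGraph (lam2 γ) (DiagonalMul γ))
    (hL : ∀ γ, HasBasisGraph (L γ) (SecondMul γ)) (hW : HasBasisGraph W FirstMulBySecond)
    (f : Mor G →₀ 𝕜) :
    W.comp ((f.sum fun γ c ↦ c • L γ).comp (adjoint W)) = (f.sum fun γ c ↦ c • lam2 γ) ∧
      ((f.sum fun γ c ↦ c • lam2 γ) = 0 ↔ (f.sum fun γ c ↦ c • lam γ) = 0) := by
  constructor
  · simp only [Finsupp.sum, finsetSum_comp, comp_finsetSum, smul_comp, comp_smul,
      comp_secondMul_comp_adjoint_eq (hlam2 _) (hL _) hW]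
  · have hlam2_indep := linearIndependent_of_hasBasisGraph_diagonalMul hlam2
    have hlam_indep := linearIndependent_of_hasBasisGraph_isComp hlam
    exact (map_eq_zero_iff (Finsupp.linearCombination 𝕜 lam2) hlam2_indep).trans
      (map_eq_zero_iff (Finsupp.linearCombination 𝕜 lam) hlam_indep).symm

end RCLike

end Groupoid

/-- For a finitely supported `f : Mor G → ℂ`, with `Λ f = Σ_γ f γ • λ_γ` on `ℓ²(Mor G)`,
`Λ₂ f = Σ_γ f γ • (λ_γ ⊗ λ_γ)` and `1 ⊗ Λ f = Σ_γ f γ • (1 ⊗ λ_γ)` on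
`ℓ²(Mor G × Mor G)`, and `W_λ` the partial isometry with `W_λ e_{(α,β)} = e_{(βα,β)}`
if `r α = d β` and `0` otherwise, we have (a) `W_λ (1 ⊗ Λ f) W_λ* = Λ₂ f` and
(b) `Λ₂ f = 0 ↔ Λ f = 0`. -/
theorem stmt7 {G : Type*} [Groupoid G] [DecidableEq (Mor G)] [DecidableEq (Mor G × Mor G)]
    (lam : Mor G → (lp (fun _ : Mor G => ℂ) 2 →L[ℂ] lp (fun _ : Mor G => ℂ) 2))
    (hlam : ∀ (X Y : G) (g : X ⟶ Y) (P : G) (b : P ⟶ X),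
      lam ⟨X, Y, g⟩ (lp.single 2 (⟨P, X, b⟩ : Mor G) 1) =
        lp.single 2 (⟨P, Y, b ≫ g⟩ : Mor G) 1)
    (hlam' : ∀ (X Y : G) (g : X ⟶ Y) (P Q : G) (b : P ⟶ Q), Q ≠ X →
      lam ⟨X, Y, g⟩ (lp.single 2 (⟨P, Q, b⟩ : Mor G) 1) = 0)
    (lam2 : Mor G →
      (lp (fun _ : Mor G × Mor G => ℂ) 2 →L[ℂ] lp (fun _ : Mor G × Mor G => ℂ) 2))
    (hlam2 : ∀ (X Y : G) (g : X ⟶ Y) (P Q : G) (a : P ⟶ X) (b : Q ⟶ X),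
      lam2 ⟨X, Y, g⟩ (lp.single 2 ((⟨P, X, a⟩ : Mor G), (⟨Q, X, b⟩ : Mor G)) 1) =
        lp.single 2 ((⟨P, Y, a ≫ g⟩ : Mor G), (⟨Q, Y, b ≫ g⟩ : Mor G)) 1)
    (hlam2' : ∀ (X Y : G) (g : X ⟶ Y) (α β : Mor G), (α.2.1 ≠ X ∨ β.2.1 ≠ X) →
      lam2 ⟨X, Y, g⟩ (lp.single 2 (α, β) 1) = 0)
    (L : Mor G →
      (lp (fun _ : Mor G × Mor G => ℂ) 2 →L[ℂ] lp (fun _ : Mor G × Mor G => ℂ) 2))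
    (hL : ∀ (X Y : G) (g : X ⟶ Y) (α : Mor G) (P : G) (b : P ⟶ X),
      L ⟨X, Y, g⟩ (lp.single 2 (α, (⟨P, X, b⟩ : Mor G)) 1) =
        lp.single 2 (α, (⟨P, Y, b ≫ g⟩ : Mor G)) 1)
    (hL' : ∀ (X Y : G) (g : X ⟶ Y) (α : Mor G) (P Q : G) (b : P ⟶ Q), Q ≠ X →
      L ⟨X, Y, g⟩ (lp.single 2 (α, (⟨P, Q, b⟩ : Mor G)) 1) = 0)
    (W : lp (fun _ : Mor G × Mor G => ℂ) 2 →L[ℂ] lp (fun _ : Mor G × Mor G => ℂ) 2)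
    (hW : ∀ (X Y Z : G) (a : X ⟶ Y) (b : Y ⟶ Z),
      W (lp.single 2 ((⟨X, Y, a⟩ : Mor G), (⟨Y, Z, b⟩ : Mor G)) 1) =
        lp.single 2 ((⟨X, Z, a ≫ b⟩ : Mor G), (⟨Y, Z, b⟩ : Mor G)) 1)
    (hW' : ∀ (X Y P Q : G) (a : X ⟶ Y) (b : P ⟶ Q), Y ≠ P →
      W (lp.single 2 ((⟨X, Y, a⟩ : Mor G), (⟨P, Q, b⟩ : Mor G)) 1) = 0) :
    ∀ f : Mor G →₀ ℂ,
      (W.comp ((f.sum fun γ c => c • L γ).comp (adjoint W)) = f.sum fun γ c => c • lam2 γ) ∧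
      ((f.sum fun γ c => c • lam2 γ) = 0 ↔ (f.sum fun γ c => c • lam γ) = 0) := by
  exact stmt7_general
    (fun ⟨X, Y, g⟩ ↦ hasBasisGraph_isComp (hlam X Y g) (hlam' X Y g))
    (fun ⟨X, Y, g⟩ ↦ hasBasisGraph_diagonalMul (hlam2 X Y g) (hlam2' X Y g))
    (fun ⟨X, Y, g⟩ ↦ hasBasisGraph_secondMul (hL X Y g) (hL' X Y g))
    (hasBasisGraph_firstMulBySecond hW hW')
end
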